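/- The following commutation relations hold: [O2, H] = −O2, [O1, H] = O1, [O2, E] = −O2, [O1, E] = −O1, [O2, Y] = O1, and [O1, X] = O2. -/

import Mathlib

open MvPolynomial Complex

noncomputable section

/-- The space of complex polynomials in three variables `x = X 0`, `y = X 1`, `q = X 2`. -/
abbrev V : Type := MvPolynomial (Fin 3) ℂ

/-- Partial derivative `∂_x`. -/
def Dx : Module.End ℂ V := (pderiv (0 : Fin 3)).toLinearMap
/-- Partial derivative `∂_y`. -/
def Dy : Module.End ℂ V := (pderiv (1 : Fin 3)).toLinearMap
/-- Partial derivative `∂_q`. -/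
def Dq : Module.End ℂ V := (pderiv (2 : Fin 3)).toLinearMap
/-- Multiplication by `x`. -/
def Mx : Module.End ℂ V := LinearMap.mulLeft ℂ (X 0)
/-- Multiplication by `y`. -/
def My : Module.End ℂ V := LinearMap.mulLeft ℂ (X 1)
/-- Multiplication by `q`. -/
def Mq : Module.End ℂ V := LinearMap.mulLeft ℂ (X 2)

/-- `X = -y ∂_x - (i/2) q²`. -/
def opX : Module.End ℂ V := -(My * Dx) - (I / 2) • (Mq * Mq)
/-- `H = -x ∂_x + y ∂_y + q ∂_q + 1/2`. -/
def opH : Module.End ℂ V := -(Mx * Dx) + My * Dy + Mq * Dq + (1 / 2 : ℂ) • 1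
/-- `Y = -x ∂_y - (i/2) ∂_q²`. -/
def opY : Module.End ℂ V := -(Mx * Dy) - (I / 2) • (Dq * Dq)
/-- `E = x ∂_x + y ∂_y + 1/2`. -/
def opE : Module.End ℂ V := Mx * Dx + My * Dy + (1 / 2 : ℂ) • 1
/-- The symplectic Dirac operator `D_s = i q ∂_y - ∂_x ∂_q`. -/
def Ds : Module.End ℂ V := I • (Mq * Dy) - Dx * Dq
/-- `X_s = y ∂_q + i x q`. -/
def Xs : Module.End ℂ V := My * Dq + I • (Mx * Mq)
/-- `O1 = x² ∂_x + x y ∂_y - (1/2) x q ∂_q + (i/2) y ∂_q² + (1/2) x`. -/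
def opO1 : Module.End ℂ V :=
  Mx * Mx * Dx + Mx * My * Dy - (1 / 2 : ℂ) • (Mx * Mq * Dq) + (I / 2) • (My * Dq * Dq)
    + (1 / 2 : ℂ) • Mx
/-- `O2 = x y ∂_x + y² ∂_y + (1/2) y q ∂_q + (i/2) x q² + y`. -/
def opO2 : Module.End ℂ V :=
  Mx * My * Dx + My * My * Dy + (1 / 2 : ℂ) • (My * Mq * Dq) + (I / 2) • (Mx * Mq * Mq) + My

/-!
The pairs `(x, y)`, `(∂_y, -∂_x)` and `(∂_q, -i q)` are `sl₂`-doublets under commutators with `H`,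
`X`, `Y`, so the determinant of any two of them commutes with `H`, `X` and `Y`. Two of these
determinants are `E - 1/2` and `X_s = y ∂_q + i x q`. Since

  `O1 = x E + (i/2) X_s ∂_q`,  `O2 = y E + (i/2) X_s (-i q)`,

the pair `(O1, O2)` is again a doublet. It is homogeneous of degree one for `E` because `x`, `y`
and `X_s` are, while `q` and `∂_q` commute with `E`.
-/

section Commutator

variable {A : Type*} [Ring A]

theorem lie_one (a : A) : ⁅a, (1 : A)⁆ = 0 :=
  (Commute.one_right a).lie_eq

theorem lie_mul (a b c : A) : ⁅a, b * c⁆ = ⁅a, b⁆ * c + b * ⁅a, c⁆ := by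
  simp only [Ring.lie_def]
  noncomm_ring

theorem mul_lie (a b c : A) : ⁅a * b, c⁆ = a * ⁅b, c⁆ + ⁅a, c⁆ * b := by
  simp only [Ring.lie_def]
  noncomm_ring

theorem mul_lie_of_commute_left {a c : A} (h : Commute a c) (b : A) :
    ⁅a * b, c⁆ = a * ⁅b, c⁆ := by
  rw [mul_lie, h.lie_eq, zero_mul, add_zero]

theorem mul_lie_of_commute_right {b c : A} (h : Commute b c) (a : A) :
    ⁅a * b, c⁆ = ⁅a, c⁆ * b := by
  rw [mul_lie, h.lie_eq, mul_zero, zero_add]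

end Commutator

section Sl2

attribute [local instance] LieRing.ofAssociativeRing

variable {A : Type*} [Ring A]

/-- The commutators with `H`, `X`, `Y` act on `u`, `v` as `sl₂` acts on a weight basis of its
two-dimensional representation. Commutators are taken from the right, as in `⁅u, H⁆`, so that `u`
and `v` have weights `1` and `-1`. -/
structure IsSl2Doublet (H X Y u v : A) : Prop where
  left_lie_H : ⁅u, H⁆ = u
  right_lie_H : ⁅v, H⁆ = -v
  left_lie_X : ⁅u, X⁆ = v
  right_lie_X : ⁅v, X⁆ = 0
  left_lie_Y : ⁅u, Y⁆ = 0
  right_lie_Y : ⁅v, Y⁆ = u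

namespace IsSl2Doublet

variable {H X Y u v u' v' : A}

theorem add (d : IsSl2Doublet H X Y u v) (d' : IsSl2Doublet H X Y u' v') :
    IsSl2Doublet H X Y (u + u') (v + v') where
  left_lie_H := by rw [add_lie, d.left_lie_H, d'.left_lie_H]
  right_lie_H := by rw [add_lie, d.right_lie_H, d'.right_lie_H, neg_add]
  left_lie_X := by rw [add_lie, d.left_lie_X, d'.left_lie_X]
  right_lie_X := by rw [add_lie, d.right_lie_X, d'.right_lie_X, add_zero]
  left_lie_Y := by rw [add_lie, d.left_lie_Y, d'.left_lie_Y, add_zero]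
  right_lie_Y := by rw [add_lie, d.right_lie_Y, d'.right_lie_Y]

theorem smul {R : Type*} [CommRing R] [Algebra R A] (r : R) (d : IsSl2Doublet H X Y u v) :
    IsSl2Doublet H X Y (r • u) (r • v) where
  left_lie_H := by rw [smul_lie, d.left_lie_H]
  right_lie_H := by rw [smul_lie, d.right_lie_H, smul_neg]
  left_lie_X := by rw [smul_lie, d.left_lie_X]
  right_lie_X := by rw [smul_lie, d.right_lie_X, smul_zero]
  left_lie_Y := by rw [smul_lie, d.left_lie_Y, smul_zero]
  right_lie_Y := by rw [smul_lie, d.right_lie_Y]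

theorem mul_left_of_commute (d : IsSl2Doublet H X Y u v) {c : A}
    (hc : ∀ a ∈ ({H, X, Y} : Set A), Commute c a) : IsSl2Doublet H X Y (c * u) (c * v) := by
  simp only [Set.mem_insert_iff, Set.mem_singleton_iff, forall_eq_or_imp, forall_eq] at hc
  obtain ⟨hH, hX, hY⟩ := hc
  constructor <;>
    simp only [mul_lie_of_commute_left, hH, hX, hY, d.left_lie_H, d.right_lie_H, d.left_lie_X,
      d.right_lie_X, d.left_lie_Y, d.right_lie_Y, mul_neg, mul_zero]

theorem mul_right_of_commute (d : IsSl2Doublet H X Y u v) {c : A}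
    (hc : ∀ a ∈ ({H, X, Y} : Set A), Commute c a) : IsSl2Doublet H X Y (u * c) (v * c) := by
  simp only [Set.mem_insert_iff, Set.mem_singleton_iff, forall_eq_or_imp, forall_eq] at hc
  obtain ⟨hH, hX, hY⟩ := hc
  constructor <;>
    simp only [mul_lie_of_commute_right, hH, hX, hY, d.left_lie_H, d.right_lie_H, d.left_lie_X,
      d.right_lie_X, d.left_lie_Y, d.right_lie_Y, neg_mul, zero_mul]

theorem commute_mul_sub_mul (d : IsSl2Doublet H X Y u v) (d' : IsSl2Doublet H X Y u' v') :
    ∀ a ∈ ({H, X, Y} : Set A), Commute (v * u' - u * v') a := by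
  simp only [Set.mem_insert_iff, Set.mem_singleton_iff, forall_eq_or_imp, forall_eq,
    commute_iff_lie_eq, sub_lie, mul_lie, d.left_lie_H, d.right_lie_H, d.left_lie_X,
    d.right_lie_X, d.left_lie_Y, d.right_lie_Y, d'.left_lie_H, d'.right_lie_H, d'.left_lie_X,
    d'.right_lie_X, d'.left_lie_Y, d'.right_lie_Y]
  refine ⟨?_, ?_, ?_⟩ <;> noncomm_ring

end IsSl2Doublet

end Sl2

section PolynomialOperators

variable {R : Type*} [CommRing R]

section Derivation

variable {B : Type*} [CommRing B] [Algebra R B]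

theorem lie_mulLeft_mulLeft (a b : B) :
    ⁅LinearMap.mulLeft R a, LinearMap.mulLeft R b⁆ = 0 := by
  ext c
  simp [Ring.lie_def, mul_left_comm]

theorem lie_derivation_mulLeft (D : Derivation R B B) (b : B) :
    ⁅D.toLinearMap, LinearMap.mulLeft R b⁆ = LinearMap.mulLeft R (D b) := by
  ext c
  simp [Ring.lie_def, mul_comm]

end Derivation

variable {σ : Type*}

-- Same ring as the default instance, whose additive group does not unify at instance transparency
-- with that of the semiring `Module.End R (MvPolynomial σ R)`, so that `simp` and `rw` get stuck.
local instance : Ring (Module.End R (MvPolynomial σ R)) :=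
  { (inferInstance : Semiring (Module.End R (MvPolynomial σ R))),
    (inferInstance : Ring (Module.End R (MvPolynomial σ R))) with }

theorem lie_pderiv_pderiv (i j : σ) :
    ⁅(pderiv (R := R) i).toLinearMap, (pderiv (R := R) j).toLinearMap⁆ = 0 := by
  classical
  have commutator_eq_zero : ⁅(pderiv i : Derivation R (MvPolynomial σ R) (MvPolynomial σ R)),
      (pderiv j : Derivation R (MvPolynomial σ R) (MvPolynomial σ R))⁆ = 0 := by
    refine derivation_ext fun k => ?_
    rw [Derivation.commutator_apply]
    simp only [pderiv_X, Pi.single_apply]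
    split_ifs <;> simp
  exact congrArg Derivation.toLinearMap commutator_eq_zero

variable [DecidableEq σ]

theorem lie_pderiv_mulLeft_X (i j : σ) :
    ⁅(pderiv (R := R) i).toLinearMap, LinearMap.mulLeft R (X (R := R) j)⁆ =
      if j = i then 1 else 0 := by
  rw [lie_derivation_mulLeft, pderiv_X, Pi.single_apply]
  split_ifs <;> simp [Module.End.one_eq_id]

theorem lie_mulLeft_X_pderiv (i j : σ) :
    ⁅LinearMap.mulLeft R (X (R := R) j), (pderiv (R := R) i).toLinearMap⁆ =
      if j = i then -1 else 0 := by
  rw [Ring.lie_def, ← neg_sub, ← Ring.lie_def, lie_pderiv_mulLeft_X]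
  split_ifs <;> simp

section Doublets

attribute [local instance] LieRing.ofAssociativeRing

attribute [local simp] lie_mul mul_lie lie_one lie_mulLeft_mulLeft
  lie_pderiv_pderiv lie_pderiv_mulLeft_X lie_mulLeft_X_pderiv Mx My Mq Dx Dy Dq

theorem isSl2Doublet_Mx_My : IsSl2Doublet opH opX opY Mx My := by
  constructor <;> simp [opH, opX, opY]

theorem isSl2Doublet_Dy_neg_Dx : IsSl2Doublet opH opX opY Dy (-Dx) := by
  constructor <;> simp [opH, opX, opY]

theorem isSl2Doublet_Dq_neg_I_smul_Mq : IsSl2Doublet opH opX opY Dq (-I • Mq) := by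
  constructor
  case left_lie_X =>
    calc ⁅Dq, opX⁆ = -((I / 2) • (Mq + Mq)) := by simp [opX]
      _ = -I • Mq := by module
  case right_lie_Y =>
    calc ⁅-I • Mq, opY⁆ = -((I / 2 * I) • (Dq + Dq)) := by simp [opY, mul_smul]
      _ = -(I * I) • Dq := by module
      _ = Dq := by rw [I_mul_I, neg_neg, one_smul]
  all_goals simp [opH, opX, opY]

theorem opE_eq_mul_sub_mul_add : opE = (My * Dy - Mx * -Dx) + (1 / 2 : ℂ) • 1 := by
  rw [opE, mul_neg, sub_neg_eq_add, add_comm (My * Dy)]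

theorem Xs_eq_mul_sub_mul : Xs = My * Dq - Mx * (-I • Mq) := by
  rw [Xs, mul_smul_comm, neg_smul, sub_neg_eq_add]

theorem commute_opE : ∀ a ∈ ({opH, opX, opY} : Set (Module.End ℂ V)), Commute opE a := by
  intro a ha
  rw [opE_eq_mul_sub_mul_add]
  exact (isSl2Doublet_Mx_My.commute_mul_sub_mul isSl2Doublet_Dy_neg_Dx a ha).add_left
    ((Commute.one_left a).smul_left _)

theorem commute_Xs : ∀ a ∈ ({opH, opX, opY} : Set (Module.End ℂ V)), Commute Xs a := by
  rw [Xs_eq_mul_sub_mul]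
  exact isSl2Doublet_Mx_My.commute_mul_sub_mul isSl2Doublet_Dq_neg_I_smul_Mq

theorem I_div_two_mul_I : I / 2 * I = -(1 / 2) := by
  linear_combination I_mul_I / 2

theorem opO1_eq : opO1 = Mx * opE + (I / 2) • (Xs * Dq) := by
  simp only [opO1, opE, Xs, mul_add, add_mul, mul_smul_comm, smul_mul_assoc, smul_add, smul_smul,
    I_div_two_mul_I, mul_one, mul_assoc]
  module

theorem opO2_eq : opO2 = My * opE + (I / 2) • (Xs * (-I • Mq)) := by
  have commute_My_Mx : Commute My Mx := by simp [commute_iff_lie_eq]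
  have mul_Dq_Mq : Dq * Mq = Mq * Dq + 1 := by
    rw [← sub_eq_iff_eq_add', ← Ring.lie_def]
    simp
  have I_div_two_mul_neg_I : I / 2 * -I = 1 / 2 := by rw [mul_neg, I_div_two_mul_I, neg_neg]
  rw [mul_smul_comm, smul_smul, I_div_two_mul_neg_I]
  simp only [opO2, opE, Xs, mul_add, add_mul, mul_smul_comm, smul_mul_assoc, smul_add, smul_smul,
    mul_one, mul_assoc, mul_Dq_Mq]
  rw [← mul_assoc My Mx, commute_My_Mx.eq, mul_assoc]
  module

theorem isSl2Doublet_opO1_opO2 : IsSl2Doublet opH opX opY opO1 opO2 := by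
  rw [opO1_eq, opO2_eq]
  exact (isSl2Doublet_Mx_My.mul_right_of_commute commute_opE).add
    ((isSl2Doublet_Dq_neg_I_smul_Mq.mul_left_of_commute commute_Xs).smul _)

theorem lie_Mx_opE : ⁅Mx, opE⁆ = -Mx := by
  simp [opE]

theorem lie_My_opE : ⁅My, opE⁆ = -My := by
  simp [opE]

theorem commute_Mq_opE : Commute Mq opE := by
  simp [commute_iff_lie_eq, opE]

theorem commute_Dq_opE : Commute Dq opE := by
  simp [commute_iff_lie_eq, opE]

theorem lie_Xs_opE : ⁅Xs, opE⁆ = -Xs := by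
  rw [Xs, add_lie, smul_lie, mul_lie_of_commute_right commute_Dq_opE,
    mul_lie_of_commute_right commute_Mq_opE, lie_Mx_opE, lie_My_opE, neg_mul, neg_mul, smul_neg,
    neg_add]

theorem lie_opO1_opE : ⁅opO1, opE⁆ = -opO1 := by
  rw [opO1_eq, add_lie, smul_lie, mul_lie_of_commute_right (Commute.refl opE),
    mul_lie_of_commute_right commute_Dq_opE, lie_Mx_opE, lie_Xs_opE, neg_mul, neg_mul, smul_neg,
    neg_add]

theorem lie_opO2_opE : ⁅opO2, opE⁆ = -opO2 := by
  rw [opO2_eq, add_lie, smul_lie, mul_lie_of_commute_right (Commute.refl opE),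
    mul_lie_of_commute_right (commute_Mq_opE.smul_left _), lie_My_opE, lie_Xs_opE, neg_mul,
    neg_mul, smul_neg, neg_add]

end Doublets

end PolynomialOperators

/-- `[O2, H] = -O2`, `[O1, H] = O1`, `[O2, E] = -O2`, `[O1, E] = -O1`,
`[O2, Y] = O1`, `[O1, X] = O2`. -/
theorem commutators_O_with_sl2 :
    opO2 * opH - opH * opO2 = -opO2 ∧
    opO1 * opH - opH * opO1 = opO1 ∧
    opO2 * opE - opE * opO2 = -opO2 ∧
    opO1 * opE - opE * opO1 = -opO1 ∧
    opO2 * opY - opY * opO2 = opO1 ∧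
    opO1 * opX - opX * opO1 = opO2 := by
  have doublet := isSl2Doublet_opO1_opO2
  exact ⟨doublet.right_lie_H, doublet.left_lie_H, lie_opO2_opE, lie_opO1_opE,
    doublet.right_lie_Y, doublet.left_lie_X⟩
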